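/- Let (γ_1,c_1),…,(γ_k,c_k) be pairwise distinct pairs of real numbers with γ_i > 0 for every i. Then the family of real-valued functions on ℝ consisting of the constant function 1, the identity function y ↦ y, the functions y ↦ G(y;γ_i,c_i) for i = 1,…,k, and the functions y ↦ y·G(y;γ_i,c_i) for i = 1,…,k, is linearly independent over ℝ (as elements of the vector space of functions ℝ → ℝ). -/

import Mathlib

/-- The logistic transition function `G(y; γ, c) = 1/(1+e^{-γ(y-c)})`. -/
noncomputable def logisticG (γ c y : ℝ) : ℝ := 1 / (1 + Real.exp (-γ * (y - c)))

/-- An entire function vanishing on the reals is zero. -/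
lemma entire_zero_of_real (F : ℂ → ℂ) (hF : Differentiable ℂ F) (h : ∀ y : ℝ, F (y : ℂ) = 0)
    (z : ℂ) : F z = 0 := by
  have h1 : AnalyticOnNhd ℂ F Set.univ := fun x _ => hF.analyticAt x
  have h2 : AnalyticOnNhd ℂ (fun _ : ℂ => (0 : ℂ)) Set.univ := fun x _ => analyticAt_const
  have ht : Filter.Tendsto (fun y : ℝ => (y : ℂ)) (nhdsWithin 0 {0}ᶜ)
      (nhdsWithin (0 : ℂ) {0}ᶜ) := by
    apply tendsto_nhdsWithin_of_tendsto_nhds_of_eventually_within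
    · have := (Complex.continuous_ofReal.tendsto 0)
      rw [Complex.ofReal_zero] at this
      exact this.mono_left nhdsWithin_le_nhds
    · filter_upwards [self_mem_nhdsWithin] with y hy
      simpa using hy
  have hf : ∃ᶠ z in nhdsWithin (0 : ℂ) {0}ᶜ, F z = (fun _ : ℂ => (0 : ℂ)) z := by
    apply ht.frequently
    exact (Filter.Eventually.of_forall h).frequently
  exact congrFun (h1.eq_of_frequently_eq h2 hf) z

/-- The complexified denominator. -/
noncomputable def logDen (γ c : ℝ) (z : ℂ) : ℂ := 1 + Complex.exp (-γ * (z - c))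

lemma logDen_real (γ c y : ℝ) :
    logDen γ c y = ((1 + Real.exp (-γ * (y - c)) : ℝ) : ℂ) := by
  simp [logDen]

lemma logDen_real_ne (γ c y : ℝ) : logDen γ c y ≠ 0 := by
  rw [logDen_real]
  have : 0 < 1 + Real.exp (-γ * (y - c)) := by positivity
  exact_mod_cast this.ne'

lemma logDen_self (γ c : ℝ) (h : 0 < γ) :
    logDen γ c (c + (Real.pi / γ : ℝ) * Complex.I) = 0 := by
  have h0 : (γ : ℂ) ≠ 0 := by exact_mod_cast h.ne'
  have : -(γ : ℂ) * ((c + (Real.pi / γ : ℝ) * Complex.I) - c) = -(Real.pi * Complex.I) := by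
    push_cast
    field_simp
    ring
  rw [logDen, this, Complex.exp_neg, Complex.exp_pi_mul_I]
  norm_num

lemma logDen_eq_zero (γ c γ' c' : ℝ) (h : 0 < γ) (h' : 0 < γ') (hle : γ' ≤ γ)
    (h0 : logDen γ' c' (c + (Real.pi / γ : ℝ) * Complex.I) = 0) : γ' = γ ∧ c' = c := by
  have he : Complex.exp (-γ' * ((c + (Real.pi / γ : ℝ) * Complex.I) - c')) = -1 := by
    rw [logDen] at h0
    linear_combination h0
  have hn := congrArg norm he
  rw [Complex.norm_exp] at hn
  have hr := congrArg Complex.re he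
  rw [Complex.exp_re] at hr
  have e1 : (-(γ' : ℂ) * ((c + (Real.pi / γ : ℝ) * Complex.I) - c')).re = -γ' * (c - c') := by
    simp [-Complex.ofReal_div]
  have e2 : (-(γ' : ℂ) * ((c + (Real.pi / γ : ℝ) * Complex.I) - c')).im
      = -(γ' * (Real.pi / γ)) := by
    simp [-Complex.ofReal_div]
  rw [e1] at hn hr
  rw [e2, Real.cos_neg] at hr
  simp only [norm_neg, norm_one] at hn
  rw [hn] at hr
  rw [Real.exp_eq_one_iff] at hn
  have hc : c' = c := by
    rcases mul_eq_zero.mp hn with h1 | h1 <;> linarith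
  refine ⟨?_, hc⟩
  have hpi := Real.pi_pos
  have hle2 : γ' * (Real.pi / γ) ≤ Real.pi := by
    rw [← mul_div_assoc, div_le_iff₀ h]
    nlinarith
  have := Real.injOn_cos (x₁ := γ' * (Real.pi / γ)) (x₂ := Real.pi)
    ⟨by positivity, hle2⟩ ⟨hpi.le, le_rfl⟩ (by simpa using hr)
  field_simp at this
  exact this

/-- The family consisting of the constant function 1, the identity, the logistic functions
`y ↦ G(y; γᵢ, cᵢ)` and the functions `y ↦ y · G(y; γᵢ, cᵢ)`, for pairwise distinct pairs
`(γᵢ, cᵢ)` with `γᵢ > 0`, is linearly independent in the real vector space of functions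
`ℝ → ℝ`. -/
theorem linearIndependent_logistic_family
    (k : ℕ) (γ c : Fin k → ℝ) (hγ : ∀ i, 0 < γ i)
    (hdist : ∀ i j : Fin k, i ≠ j → (γ i, c i) ≠ (γ j, c j)) :
    LinearIndependent ℝ
      (Sum.elim
        (Sum.elim (fun _ : Unit => fun _ : ℝ => (1 : ℝ))
                  (fun _ : Unit => fun y : ℝ => y))
        (Sum.elim (fun i : Fin k => fun y : ℝ => logisticG (γ i) (c i) y)
                  (fun i : Fin k => fun y : ℝ => y * logisticG (γ i) (c i) y))) := by
  classical
  rw [Fintype.linearIndependent_iff]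
  intro g hg
  set a := g (Sum.inl (Sum.inl ()))
  set b := g (Sum.inl (Sum.inr ()))
  set p : Fin k → ℝ := fun i => g (Sum.inr (Sum.inl i)) with hp
  set q : Fin k → ℝ := fun i => g (Sum.inr (Sum.inr i)) with hq
  have hmain : ∀ y : ℝ, a + b * y + ∑ i, (p i + q i * y) * logisticG (γ i) (c i) y = 0 := by
    intro y
    have := congrFun hg y
    simp [Fintype.sum_sum_type] at this
    rw [← this]
    simp only [add_mul, Finset.sum_add_distrib, hp, hq, mul_assoc, a, b]
  have hpq : ∀ i, p i = 0 ∧ q i = 0 := by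
    by_contra hcon
    set S : Finset (Fin k) := Finset.univ.filter (fun i => ¬ (p i = 0 ∧ q i = 0)) with hS
    have hne : S.Nonempty := by
      push Not at hcon
      obtain ⟨i, hi⟩ := hcon
      exact ⟨i, by simpa [hS] using hi⟩
    obtain ⟨i, hiS, hmax⟩ := S.exists_max_image γ hne
    let F : ℂ → ℂ := fun z => (a + b * z) * ∏ j ∈ S, logDen (γ j) (c j) z
      + ∑ l ∈ S, (p l + q l * z) * ∏ j ∈ S.erase l, logDen (γ j) (c j) z
    have hD : ∀ γ c : ℝ, Differentiable ℂ (logDen γ c) := by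
      intro γ c
      unfold logDen
      fun_prop
    have hF : Differentiable ℂ F := by
      have hP : ∀ T : Finset (Fin k),
          Differentiable ℂ (fun z => ∏ j ∈ T, logDen (γ j) (c j) z) := fun T =>
        Differentiable.fun_finsetProd fun j _ => hD _ _
      apply Differentiable.add
      · exact Differentiable.mul (by fun_prop) (hP S)
      · exact Differentiable.fun_sum fun l _ => Differentiable.mul (by fun_prop) (hP _)
    have hF0 : ∀ y : ℝ, F y = 0 := by
      intro y
      have hm : ((a : ℂ) + b * y + ∑ l ∈ S, (p l + q l * y) / logDen (γ l) (c l) y) = 0 := by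
        have h1 := hmain y
        rw [← Finset.sum_subset (Finset.subset_univ S)] at h1
        · have h2 := congrArg (fun x : ℝ => (x : ℂ)) h1
          simp only [Complex.ofReal_zero] at h2
          rw [← h2]
          push_cast
          congr 1
          apply Finset.sum_congr rfl
          intro l _
          rw [logDen_real, logisticG]
          push_cast
          ring
        · intro l _ hl
          have : p l = 0 ∧ q l = 0 := by
            by_contra h
            exact hl (by simpa [hS] using h)
          rw [this.1, this.2]
          ring
      have : F y = ((a : ℂ) + b * y + ∑ l ∈ S, (p l + q l * y) / logDen (γ l) (c l) y)
          * ∏ j ∈ S, logDen (γ j) (c j) y := by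
        simp only [F]
        rw [add_mul _ (∑ l ∈ S, _), Finset.sum_mul]
        congr 1
        apply Finset.sum_congr rfl
        intro l hl
        rw [← Finset.mul_prod_erase S _ hl]
        have := logDen_real_ne (γ l) (c l) y
        field_simp
      rw [this, hm, zero_mul]
    have hz := entire_zero_of_real F hF hF0 (c i + (Real.pi / γ i : ℝ) * Complex.I)
    set z : ℂ := c i + (Real.pi / γ i : ℝ) * Complex.I with hzdef
    have hself : logDen (γ i) (c i) z = 0 := logDen_self _ _ (hγ i)
    simp only [F] at hz
    rw [Finset.prod_eq_zero hiS hself, mul_zero, zero_add, Finset.sum_eq_single_of_mem i hiS] at hz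
    · rcases mul_eq_zero.mp hz with h | h
      · have him := congrArg Complex.im h
        have hre := congrArg Complex.re h
        simp [hzdef, -Complex.ofReal_div] at him hre
        have hγi := hγ i
        have hq0 : q i = 0 := by
          have := Real.pi_ne_zero
          have := hγi.ne'
          tauto
        have hp0 : p i = 0 := by simpa [hq0] using hre
        have := (Finset.mem_filter.mp hiS).2
        exact this ⟨hp0, hq0⟩
      · obtain ⟨j, hj, hj0⟩ := Finset.prod_eq_zero_iff.mp h
        obtain ⟨hji, hjS⟩ := Finset.mem_erase.mp hj
        obtain ⟨e1, e2⟩ := logDen_eq_zero _ _ _ _ (hγ i) (hγ j) (hmax j hjS) hj0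
        exact hdist j i hji (by rw [e1, e2])
    · intro l _ hl
      rw [Finset.prod_eq_zero (Finset.mem_erase.mpr ⟨hl.symm, hiS⟩) hself, mul_zero]
  have hab : ∀ y : ℝ, a + b * y = 0 := by
    intro y
    have := hmain y
    simpa [fun i => (hpq i).1, fun i => (hpq i).2] using this
  have ha : a = 0 := by simpa using hab 0
  have hb : b = 0 := by simpa [ha] using hab 1
  rintro ((_ | _) | (i | i))
  · exact ha
  · exact hb
  · exact (hpq i).1
  · exact (hpq i).2
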